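/- The map ψ(z',z_n) := (2^{1/2m₁}(1+z_n)^{−1/m₁} z₁, …, 2^{1/2m_{n−1}}(1+z_n)^{−1/m_{n−1}} z_{n−1}, (1−z_n)/(1+z_n)), with principal-branch complex powers, is an involution: ψ(ψ(z)) = z for every z = (z',z_n) ∈ ℂⁿ with Re(z_n) > −1. Moreover ψ(0',0) = (0',1) and ψ(0',1) = (0',0). -/

import Mathlib

open Complex Metric Set

noncomputable section

/-- `ℂⁿ` with `n = N + 1`, carrying the Euclidean norm; points are written `z = (z', z_n)`
with `z' ∈ ℂᴺ` the first `N` coordinates and `z_n` the last coordinate. -/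
abbrev CSp (N : ℕ) : Type := EuclideanSpace ℂ (Fin (N + 1))

variable {N : ℕ}

/-- The last coordinate `z_n` of `z = (z', z_n)`. -/
def lastC (z : CSp N) : ℂ := z (Fin.last N)

/-- The first `N` coordinates `z'` of `z = (z', z_n)`. -/
def initC (z : CSp N) : Fin N → ℂ := fun j => z j.castSucc

/-- The point `(z', z_n) ∈ ℂⁿ`. -/
def mkPt (z' : Fin N → ℂ) (zn : ℂ) : CSp N := WithLp.toLp 2 (Fin.snoc z' zn)

/-- The weight `wt(K) = Σ_j k_j / (2 m_j)` of a multi-index `K` with respect to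
`Λ = (1/m₁, …, 1/m_N)`. -/
def wt (m : Fin N → ℕ) (K : Fin N → ℕ) : ℝ := ∑ j, (K j : ℝ) / (2 * m j)

/-- `P` is a real-valued weighted homogeneous polynomial of the form
`P(z') = Σ_{wt(K)=wt(L)=1/2} a_{KL} z'^K conj(z')^L` with `a_{KL} = conj (a_{LK})`. -/
def IsWHP (m : Fin N → ℕ) (P : (Fin N → ℂ) → ℝ) : Prop :=
  ∃ a : (Fin N → ℕ) → (Fin N → ℕ) → ℂ,
    {q : (Fin N → ℕ) × (Fin N → ℕ) | a q.1 q.2 ≠ 0}.Finite ∧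
    (∀ K L, a K L = starRingEnd ℂ (a L K)) ∧
    (∀ K L, a K L ≠ 0 → wt m K = 1 / 2 ∧ wt m L = 1 / 2) ∧
    (∀ z' : Fin N → ℂ, (P z' : ℂ) =
      ∑ᶠ K, ∑ᶠ L, a K L * (∏ j, z' j ^ K j) * ∏ j, starRingEnd ℂ (z' j) ^ L j)

/-- The map `ψ(z', z_n) = (2^{1/2m₁}(1+z_n)^{-1/m₁} z₁, …, (1-z_n)/(1+z_n))`,
with principal-branch complex powers. -/
def psiMap (m : Fin N → ℕ) (z : CSp N) : CSp N :=
  mkPt (fun j => (2 : ℂ) ^ (1 / (2 * (m j : ℂ))) * (1 + lastC z) ^ (-(1 / (m j : ℂ))) * initC z j)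
       ((1 - lastC z) / (1 + lastC z))

theorem psi_factor (a : ℂ) (ha : 0 < a.re) (k : ℂ) (hk : k ≠ 0) :
    (2 : ℂ) ^ (1 / (2 * k)) * (2 / a) ^ (-(1 / k)) * ((2 : ℂ) ^ (1 / (2 * k)) * a ^ (-(1 / k))) = 1 := by
  have ha0 : a ≠ 0 := by
    rintro rfl
    simp at ha
  have harg : a.arg ≠ Real.pi := by
    intro h
    rw [Complex.arg_eq_pi_iff] at h
    linarith [h.1]
  have h1 : (2 / a) ^ (-(1 / k)) = (2 : ℂ) ^ (-(1 / k)) * (a ^ (-(1 / k)))⁻¹ := by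
    rw [← Complex.inv_cpow _ _ harg, div_eq_mul_inv]
    rw [Complex.cpow_def_of_ne_zero (by simp [ha0]), Complex.cpow_def_of_ne_zero (by simp),
      Complex.cpow_def_of_ne_zero (by simp [ha0]), ← Complex.exp_add]
    have h3 := Complex.log_ofReal_mul (r := 2) (by norm_num) (inv_ne_zero ha0)
    have h4 := Complex.ofReal_log (x := 2) (by norm_num)
    rw [h4] at h3
    push_cast at h3
    rw [h3]
    ring_nf
  have h5 : a ^ (-(1 / k)) ≠ 0 := by
    simp [Complex.cpow_eq_zero_iff, ha0]
  have h6 : (2 : ℂ) ^ (1 / (2 * k)) * (2 : ℂ) ^ (1 / (2 * k)) * (2 : ℂ) ^ (-(1 / k)) = 1 := by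
    rw [← Complex.cpow_add _ _ two_ne_zero, ← Complex.cpow_add _ _ two_ne_zero]
    have : 1 / (2 * k) + 1 / (2 * k) + -(1 / k) = 0 := by
      field_simp
      norm_num
    rw [this, Complex.cpow_zero]
  rw [h1]
  calc _ = ((2 : ℂ) ^ (1 / (2 * k)) * (2 : ℂ) ^ (1 / (2 * k)) * (2 : ℂ) ^ (-(1 / k))) *
        ((a ^ (-(1 / k)))⁻¹ * a ^ (-(1 / k))) := by ring
    _ = 1 := by rw [h6, inv_mul_cancel₀ h5, one_mul]

theorem lastC_mkPt {N : ℕ} (z' : Fin N → ℂ) (w : ℂ) : lastC (mkPt z' w) = w := by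
  simp [lastC, mkPt]

theorem initC_mkPt {N : ℕ} (z' : Fin N → ℂ) (w : ℂ) : initC (mkPt z' w) = z' := by
  funext j
  simp [initC, mkPt]

theorem mkPt_eta {N : ℕ} (z' : Fin N → ℂ) (w : ℂ) (z : CSp N) (h1 : z' = initC z)
    (h2 : w = lastC z) : mkPt z' w = z := by
  subst h1 h2
  ext j
  refine Fin.lastCases ?_ (fun i => ?_) j <;> simp [mkPt, initC, lastC]

/-- The map `ψ` is an involution: `ψ(ψ(z)) = z` for every `z = (z', z_n)` with
`Re z_n > -1`.  Moreover `ψ(0',0) = (0',1)` and `ψ(0',1) = (0',0)`. -/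
theorem stmt8 {N : ℕ} (hN : 1 ≤ N) (m : Fin N → ℕ) (hm : ∀ j, 0 < m j) :
    (∀ z : CSp N, -1 < (lastC z).re → psiMap m (psiMap m z) = z) ∧
    psiMap m (0 : CSp N) = EuclideanSpace.single (Fin.last N) (1 : ℂ) ∧
    psiMap m (EuclideanSpace.single (Fin.last N) (1 : ℂ)) = 0 := by
  refine ⟨fun z hz => ?_, ?_, ?_⟩
  · have ha : 0 < (1 + lastC z).re := by
      simp
      linarith
    have ha0 : 1 + lastC z ≠ 0 := by
      intro h
      rw [h] at ha
      simp at ha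
    have h2 : 1 + (1 - lastC z) / (1 + lastC z) = 2 / (1 + lastC z) := by
      field_simp
      ring
    apply mkPt_eta
    · funext j
      simp only [psiMap, lastC_mkPt, initC_mkPt]
      rw [h2, ← mul_assoc, psi_factor _ ha _ (by exact_mod_cast (hm j).ne'), one_mul]
    · simp only [psiMap, lastC_mkPt]
      rw [h2]
      field_simp
      ring
  · apply mkPt_eta
    · funext j
      simp [initC]
    · simp [lastC]
  · apply mkPt_eta
    · funext j
      simp [initC]
    · simp [lastC]
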